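/- For all integers B ≥ 0, m ≥ 0 and every real μ with 0 < μ < 1, the mean of the generalized binomial distribution is Σ_{j=0}^{2B+2m} j·p_j(2B, μ, m) = m + 2Bμ. -/

import Mathlib

open Finset

/-- The Jacobi polynomial `P_m^{(α,β)}(x)` for integer parameters `α, β`
(with `m+α ≥ 0` and `m+β ≥ 0` in the intended range), defined by
`P_m^{(α,β)}(x) = ∑_{s=0}^{m} C(m+α, m−s) C(m+β, s) ((x−1)/2)^s ((x+1)/2)^{m−s}`. -/
noncomputable def jacobiP (m : ℕ) (α β : ℤ) (x : ℝ) : ℝ :=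
  ∑ s ∈ Finset.range (m + 1),
    (((m + α).toNat.choose (m - s) : ℝ)) * (((m + β).toNat.choose s : ℝ)) *
      ((x - 1) / 2) ^ s * ((x + 1) / 2) ^ (m - s)

/-- The generalized binomial probability
`p_j(2B, μ, m) = (m!(2B+m)!)/(j!(2B+2m−j)!) μ^{j−m} (1−μ)^{2B+m−j} (P_m^{(j−m,2B+m−j)}(1−2μ))²`,
where the powers of `μ` and `1−μ` are integer (possibly negative) powers. -/
noncomputable def genBinomP (B m : ℕ) (μ : ℝ) (j : ℕ) : ℝ :=
  ((m.factorial * (2 * B + m).factorial : ℕ) : ℝ)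
      / ((j.factorial * (2 * B + 2 * m - j).factorial : ℕ) : ℝ)
    * μ ^ ((j : ℤ) - (m : ℤ)) * (1 - μ) ^ ((2 * B + m : ℤ) - (j : ℤ))
    * (jacobiP m ((j : ℤ) - (m : ℤ)) ((2 * B + m : ℤ) - (j : ℤ)) (1 - 2 * μ)) ^ 2

open Polynomial in
theorem coeff_one_add_C_mul_X_pow {R : Type*} [CommRing R] (a : R) (n k : ℕ) :
    ((1 + C a * X : R[X]) ^ n).coeff k = a ^ k * n.choose k := by
  have h : (1 + C a * X : R[X]) ^ n = ((1 + X) ^ n : R[X]).comp (C a * X) := by simp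
  rw [h, comp_C_mul_X_coeff, coeff_one_add_X_pow, mul_comm]

theorem sum_mul_choose_mul_pow {R : Type*} [CommRing R] (x y : R) (M : ℕ) :
    ∑ j ∈ range (M + 2), (j : R) * (M + 1).choose j * (x ^ j * y ^ (M + 1 - j))
      = (M + 1) * x * (x + y) ^ M := by
  rw [sum_range_succ', add_pow, mul_sum]
  simp only [Nat.cast_zero, zero_mul, add_zero]
  refine sum_congr rfl fun i _ => ?_
  have h : ((M + 1 : ℕ) : R) * M.choose i = (M + 1).choose (i + 1) * (i + 1 : ℕ) := by
    exact_mod_cast congrArg (Nat.cast (R := R)) (Nat.add_one_mul_choose_eq M i)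
  rw [Nat.add_sub_add_right, mul_comm ((i + 1 : ℕ) : R), ← h]
  push_cast
  ring

open Polynomial in
/-- The generating polynomial in the degree `m` of the Krawtchouk polynomials evaluated at `j`. -/
noncomputable def krawtchoukGen (μ : ℝ) (j k : ℕ) : ℝ[X] :=
  (1 + C (1 - μ) * X) ^ j * (1 + C (-μ) * X) ^ k

theorem jacobiP_eq_coeff (m j k : ℕ) (α β : ℤ) (hα : m + α = j) (hβ : m + β = k) (μ : ℝ) :
    jacobiP m α β (1 - 2 * μ) = (krawtchoukGen μ j k).coeff m := by
  rw [krawtchoukGen, mul_comm (_ ^ j), Polynomial.coeff_mul,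
    Finset.Nat.sum_antidiagonal_eq_sum_range_succ_mk, jacobiP, hα, hβ]
  refine sum_congr rfl fun s _ => ?_
  simp only [coeff_one_add_C_mul_X_pow, Int.toNat_natCast]
  rw [show (1 - 2 * μ - 1) / 2 = -μ by ring, show (1 - 2 * μ + 1) / 2 = 1 - μ by ring]
  ring

open Polynomial in
/-- The bivariate generating identity for the first moments of products of Krawtchouk
polynomials. -/
theorem sum_krawtchoukGen (μ : ℝ) (M : ℕ) :
    ∑ j ∈ range (M + 2), C (C ((j : ℝ) * (M + 1).choose j * (μ ^ j * (1 - μ) ^ (M + 1 - j)))) *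
        (C (krawtchoukGen μ j (M + 1 - j)) * (krawtchoukGen μ j (M + 1 - j)).map C)
      = C (C ((M + 1) * μ)) * (C (1 + C (1 - μ) * X) * (1 + C (C (1 - μ)) * X)) *
        (1 + C (C (μ * (1 - μ)) * X) * X) ^ M := by
  have key := sum_mul_choose_mul_pow
    (C (C μ) * (C (1 + C (1 - μ) * X) * (1 + C (C (1 - μ)) * X)) : ℝ[X][X])
    (C (C (1 - μ)) * (C (1 + C (-μ) * X) * (1 + C (C (-μ)) * X))) M
  have hadd : (C (C μ) * (C (1 + C (1 - μ) * X) * (1 + C (C (1 - μ)) * X)) : ℝ[X][X]) +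
      (C (C (1 - μ)) * (C (1 + C (-μ) * X) * (1 + C (C (-μ)) * X)))
      = 1 + C (C (μ * (1 - μ)) * X) * X := by
    simp only [map_add, map_mul, map_sub, map_neg, map_one]
    ring
  rw [hadd] at key
  convert key using 1
  · refine sum_congr rfl fun j _ => ?_
    simp only [krawtchoukGen, Polynomial.map_mul, Polynomial.map_pow, Polynomial.map_add,
      Polynomial.map_one, map_X, map_C, map_mul, map_pow, map_natCast, mul_pow]
    ring
  · simp only [map_mul, map_add, map_natCast, map_one]
    ring

open Polynomial in
theorem sum_krawtchoukGen_coeff_sq (μ : ℝ) (M m : ℕ) :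
    ∑ j ∈ range (M + 2), (j : ℝ) * (M + 1).choose j * (μ ^ j * (1 - μ) ^ (M + 1 - j)) *
        (krawtchoukGen μ j (M + 1 - j)).coeff m ^ 2
      = (M + 1) * μ * ((μ * (1 - μ)) ^ m * M.choose m +
        if m = 0 then 0 else
          (1 - μ) ^ 2 * ((μ * (1 - μ)) ^ (m - 1) * M.choose (m - 1))) := by
  have key := congrArg (fun p : ℝ[X][X] => (p.coeff m).coeff m) (sum_krawtchoukGen μ M)
  simp only [finsetSum_coeff, coeff_C_mul, coeff_map, coeff_mul_C] at key
  have hD (a b : ℕ) : (((1 + C (C (μ * (1 - μ)) * X) * X : ℝ[X][X]) ^ M).coeff a).coeff b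
      = if b = a then (μ * (1 - μ)) ^ a * M.choose a else 0 := by
    rw [coeff_one_add_C_mul_X_pow, mul_pow, ← C_pow, mul_assoc, coeff_C_mul,
      ← C_eq_natCast, coeff_mul_C, coeff_X_pow]
    split_ifs <;> simp
  have hR : (C (C ((M + 1) * μ)) * (C (1 + C (1 - μ) * X) * (1 + C (C (1 - μ)) * X)) *
        (1 + C (C (μ * (1 - μ)) * X) * X : ℝ[X][X]) ^ M)
      = C (C ((M + 1) * μ)) * (
          (1 + C (C (μ * (1 - μ)) * X) * X : ℝ[X][X]) ^ M
          + C (C (1 - μ)) * (C X * (1 + C (C (μ * (1 - μ)) * X) * X : ℝ[X][X]) ^ M)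
          + C (C (1 - μ)) * (X * (1 + C (C (μ * (1 - μ)) * X) * X : ℝ[X][X]) ^ M)
          + C (C ((1 - μ) ^ 2)) *
            (C X * (X * (1 + C (C (μ * (1 - μ)) * X) * X : ℝ[X][X]) ^ M))) := by
    simp only [map_add, map_mul, map_sub, map_one, map_pow]
    ring
  rw [hR] at key
  refine Eq.trans (sum_congr rfl fun j _ => ?_) (key.trans ?_)
  · ring
  · cases m with
    | zero => simp [hD, -map_mul, -map_add, mul_coeff_zero]
    | succ m => simp [coeff_C_mul, hD, coeff_X_mul, -map_mul, -map_add, -map_sub, -map_pow]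

theorem genBinomP_eq (B m j : ℕ) (μ : ℝ) (h0 : 0 < μ) (h1 : μ < 1) (hj : j ≤ 2 * B + 2 * m) :
    genBinomP B m μ j = (m.factorial * (2 * B + m).factorial : ℝ) /
        ((2 * B + 2 * m).factorial * (μ * (1 - μ)) ^ m) *
      ((2 * B + 2 * m).choose j * (μ ^ j * (1 - μ) ^ (2 * B + 2 * m - j)) *
        (krawtchoukGen μ j (2 * B + 2 * m - j)).coeff m ^ 2) := by
  have hμ : μ ≠ 0 := h0.ne'
  have hq : 1 - μ ≠ 0 := (sub_pos.2 h1).ne'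
  rw [genBinomP, jacobiP_eq_coeff m j (2 * B + 2 * m - j) _ _ (by ring)
    (by push_cast [Nat.cast_sub hj]; ring), Nat.cast_choose ℝ hj,
    show (2 * B + m : ℤ) - (j : ℤ) = ((2 * B + 2 * m - j : ℕ) : ℤ) - (m : ℤ) by
      push_cast [Nat.cast_sub hj]; ring,
    zpow_sub₀ hμ, zpow_sub₀ hq]
  simp only [zpow_natCast]
  push_cast
  field_simp
  rw [mul_pow]
  ring

/-- The mean of the generalized binomial distribution: `E(X) = m + 2Bμ`. -/
theorem genBinomP_mean (B m : ℕ) (μ : ℝ) (h0 : 0 < μ) (h1 : μ < 1) :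
    ∑ j ∈ Finset.range (2 * B + 2 * m + 1), (j : ℝ) * genBinomP B m μ j
      = (m : ℝ) + 2 * B * μ := by
  have hμ : μ ≠ 0 := h0.ne'
  have hq : 1 - μ ≠ 0 := (sub_pos.2 h1).ne'
  rcases Nat.eq_zero_or_pos (2 * B + 2 * m) with hN | hN
  · obtain ⟨rfl, rfl⟩ : B = 0 ∧ m = 0 := by omega
    simp
  obtain ⟨M, hM⟩ : ∃ M, 2 * B + 2 * m = M + 1 := ⟨2 * B + 2 * m - 1, by omega⟩
  have hsum : ∑ j ∈ range (2 * B + 2 * m + 1), (j : ℝ) * genBinomP B m μ j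
      = (m.factorial * (2 * B + m).factorial : ℝ) /
          ((M + 1).factorial * (μ * (1 - μ)) ^ m) *
        ∑ j ∈ range (M + 2), (j : ℝ) * (M + 1).choose j * (μ ^ j * (1 - μ) ^ (M + 1 - j)) *
          (krawtchoukGen μ j (M + 1 - j)).coeff m ^ 2 := by
    rw [mul_sum, hM]
    refine sum_congr rfl fun j hj => ?_
    rw [genBinomP_eq B m j μ h0 h1 (by have := mem_range.1 hj; omega), hM]
    ring
  rw [hsum, sum_krawtchoukGen_coeff_sq]
  cases m with
  | zero =>
    have hB : (2 * B : ℝ) = M + 1 := by exact_mod_cast hM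
    have hB' : 2 * B = M + 1 := hM
    simp [hB', hB]
    field_simp
  | succ m =>
    have hc : (M.choose (m + 1) : ℝ) * (m + 1) = M.choose m * (2 * B + m + 1) := by
      have h := Nat.choose_succ_right_eq M m
      rw [show M - m = 2 * B + m + 1 by omega] at h
      exact_mod_cast h
    have hf : (M.choose m : ℝ) = M.factorial / (m.factorial * (2 * B + m + 1).factorial) := by
      rw [Nat.cast_choose ℝ (by omega), show M - m = 2 * B + m + 1 by omega]
    have hm : (m + 1 : ℝ) ≠ 0 := by positivity
    simp only [Nat.add_one_ne_zero, if_false, Nat.add_sub_cancel]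
    rw [eq_div_of_mul_eq hm hc, hf, ← add_assoc, Nat.factorial_succ M, Nat.factorial_succ m]
    push_cast
    field_simp
    ring
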